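/- For all integers k >= 0, m, j >= 0 and r >= 1, setting n = 2rm + kj, the number of k-paths in P_{n,k}^{rm,j} in which every u-segment has length divisible by r equals (1/(rm+1)) * C(rm+j, rm) * C((r+1)m+j, m). -/

import Mathlib

open Finset

inductive Step : Type
  | u | d | h
deriving DecidableEq

/-- Lengths of maximal blocks of letters with `wt s ≠ none`, weighted by `wt`. -/
def runs (wt : Step → Option ℕ) : List Step → List ℕ
  | [] => []
  | s :: l =>
    match wt s, runs wt l with
    | none, r => r
    | some n, r =>
      match l with
      | [] => [n]
      | s' :: _ =>
        match wt s' with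
        | none => n :: r
        | some _ =>
          match r with
          | a :: rest => (n + a) :: rest
          | [] => [n]

def uRuns : List Step → List ℕ :=
  runs (fun s => match s with | Step.u => some 1 | _ => none)

def uhRuns (k : ℕ) : List Step → List ℕ :=
  runs (fun s => match s with | Step.u => some 1 | Step.h => some k | Step.d => none)

def alpha (i : ℕ) (w : List Step) : ℕ := (uRuns w).count i

def beta (i : ℕ) (w : List Step) : ℕ := (uRuns w).tail.count i

def IsNonneg (w : List Step) : Prop :=
  ∀ i : ℕ, (w.take i).count Step.d ≤ (w.take i).count Step.u

def pathSet (m j : ℕ) : Set (List Step) :=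
  {w | w.count Step.u = m ∧ w.count Step.d = m ∧ w.count Step.h = j ∧ IsNonneg w}

/-- no horizontal step lies on the x-axis -/
def NoLowH (w : List Step) : Prop :=
  ∀ (i : ℕ) (hi : i < w.length), w[i]'hi = Step.h →
    (w.take i).count Step.u ≠ (w.take i).count Step.d

def qSet (m j : ℕ) : Set (List Step) :=
  {w | w ∈ pathSet m j ∧ NoLowH w}

/-- normalized partial Bell polynomial (r!/m!) B_{m,r}(1!t₁,2!t₂,…) -/
def bellNorm (m r : ℕ) (t : ℕ → ℚ) : ℚ :=
  ∑ f : Fin m → Fin (m + 1),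
    if (∑ i : Fin m, (f i : ℕ)) = r ∧ (∑ i : Fin m, ((i : ℕ) + 1) * (f i : ℕ)) = m then
      (r.factorial : ℚ) / (∏ i : Fin m, ((f i : ℕ).factorial : ℚ)) * ∏ i : Fin m, t ((i : ℕ) + 1) ^ (f i : ℕ)
    else 0

/-- normalized potential polynomial  P_p^{(lam)}(1!t₁,2!t₂,…)/p! -/
def potential (lam p : ℕ) (t : ℕ → ℚ) : ℚ :=
  ∑ r ∈ Finset.range (p + 1), (Nat.choose lam r : ℚ) * bellNorm p r t

/-!
The count has a closed form for every starting height: there are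
`(s + 1) * (a + b + j)! / (a! * (b + 1)! * j!)` paths from height `s` down to the axis with `r * a`
up-steps, `b = s + r * a` down-steps, `j` horizontal steps and all u-segments of length divisible
by `r`. Such a path begins with a block `u ^ r`, a `d` or an `h`, and removing it leaves a path of
the same kind starting at height `s + r`, `s - 1` or `s`. The closed form obeys the resulting
recursion because `a * (s + r + 1) + (b + 1) * s + j * (s + 1) = (s + 1) * (a + b + j)`.
-/

section List

variable {α : Type*}

theorem exists_eq_replicate_append (a : α) (l : List α) :
    ∃ (n : ℕ) (l' : List α), l = List.replicate n a ++ l' ∧ l'.head? ≠ some a := by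
  induction l with
  | nil => exact ⟨0, [], by simp⟩
  | cons b l ih =>
    by_cases hb : b = a
    · obtain ⟨n, l', rfl, hl'⟩ := ih
      exact ⟨n + 1, l', by simp [hb, List.replicate_succ], hl'⟩
    · exact ⟨0, b :: l, by simpa using hb⟩

variable [Fintype α]

theorem sum_count_eq_length [DecidableEq α] (l : List α) : ∑ a, l.count a = l.length := by
  simpa using Multiset.sum_count_eq_card (s := univ) (m := (l : Multiset α)) (by simp)

theorem ncard_eq_sum_ncard_cons {S : Set (List α)} (hS : S.Finite) (hnil : [] ∉ S) :
    S.ncard = ∑ a, {l | a :: l ∈ S}.ncard := by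
  have hfin (a : α) : Finite {l | a :: l ∈ S} := hS.preimage List.cons_injective.injOn
  let f : (Σ a, {l | a :: l ∈ S}) → S := fun x ↦ ⟨x.1 :: x.2.1, x.2.2⟩
  have hf : f.Bijective := by
    constructor
    · rintro ⟨a, l, _⟩ ⟨b, l', _⟩ h
      obtain ⟨rfl, rfl⟩ : a = b ∧ l = l' := by simpa [f] using h
      rfl
    · rintro ⟨_ | ⟨a, l⟩, hl⟩
      · exact absurd hl hnil
      · exact ⟨⟨a, l, hl⟩, rfl⟩
  simpa only [← Nat.card_coe_set_eq, Nat.card_sigma] using (Nat.card_eq_of_bijective f hf).symm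

end List

namespace Step

instance : Fintype Step where
  elems := {u, d, h}
  complete := by rintro (_ | _ | _) <;> simp

theorem sum_univ {M : Type*} [AddCommMonoid M] (f : Step → M) : ∑ x, f x = f u + f d + f h := by
  have : (univ : Finset Step) = {u, d, h} := rfl
  simp [this, add_assoc]

end Step

open Step

section uRuns

variable {w : List Step}

theorem uRuns_cons_of_ne_u {x : Step} (hx : x ≠ u) : uRuns (x :: w) = uRuns w := by
  cases x <;> simp_all [uRuns, runs]

theorem uRuns_cons_u (hw : w.head? ≠ some u) : uRuns (u :: w) = 1 :: uRuns w := by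
  rcases w with _ | ⟨_ | _ | _, w⟩ <;> simp_all [uRuns, runs]

theorem uRuns_cons_u_cons_u {a : ℕ} {l : List ℕ} (h : uRuns (u :: w) = a :: l) :
    uRuns (u :: u :: w) = (1 + a) :: l := by
  unfold uRuns at h ⊢
  rw [runs, h]

theorem uRuns_replicate_append (hw : w.head? ≠ some u) (n : ℕ) :
    uRuns (List.replicate (n + 1) u ++ w) = (n + 1) :: uRuns w := by
  induction n with
  | zero => exact uRuns_cons_u hw
  | succ n ih =>
    rw [List.replicate_succ, List.cons_append] at ih
    simp only [List.replicate_succ, List.cons_append]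
    rw [uRuns_cons_u_cons_u ih, Nat.add_comm 1]

theorem forall_dvd_uRuns_replicate_append_iff (hw : w.head? ≠ some u) (r n : ℕ) :
    (∀ x ∈ uRuns (List.replicate n u ++ w), r ∣ x) ↔ r ∣ n ∧ ∀ x ∈ uRuns w, r ∣ x := by
  cases n with
  | zero => simp
  | succ n => simp [uRuns_replicate_append hw]

theorem forall_dvd_uRuns_replicate_self_append (r : ℕ) :
    (∀ x ∈ uRuns (List.replicate r u ++ w), r ∣ x) ↔ ∀ x ∈ uRuns w, r ∣ x := by
  obtain ⟨n, w, rfl, hw⟩ := exists_eq_replicate_append u w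
  rw [← List.append_assoc, List.replicate_append_replicate,
    forall_dvd_uRuns_replicate_append_iff hw, forall_dvd_uRuns_replicate_append_iff hw,
    Nat.dvd_add_self_left]

theorem replicate_prefix_of_forall_dvd_uRuns {r : ℕ} (h : ∀ x ∈ uRuns (u :: w), r ∣ x) :
    List.replicate r u <+: u :: w := by
  obtain ⟨n, w', hw, hw'⟩ := exists_eq_replicate_append u (u :: w)
  have hn : n ≠ 0 := by
    rintro rfl
    obtain rfl : u :: w = w' := hw
    exact hw' rfl
  rw [hw, forall_dvd_uRuns_replicate_append_iff hw'] at h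
  obtain ⟨q, rfl⟩ := Nat.exists_eq_add_of_le (Nat.le_of_dvd (Nat.pos_of_ne_zero hn) h.1)
  rw [hw, ← List.replicate_append_replicate, List.append_assoc]
  exact List.prefix_append _ _

end uRuns

/-- The path `w`, started at height `s`, never goes below the axis; `IsNonneg` is the case
`s = 0`. -/
def IsNonnegFrom (s : ℕ) (w : List Step) : Prop :=
  ∀ i : ℕ, (w.take i).count d ≤ s + (w.take i).count u

namespace IsNonnegFrom

variable {s : ℕ} {w : List Step}

theorem cons_u_iff : IsNonnegFrom s (u :: w) ↔ IsNonnegFrom (s + 1) w := by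
  rw [IsNonnegFrom, ← Nat.and_forall_add_one]
  simp [IsNonnegFrom, add_assoc, add_comm 1]

theorem cons_h_iff : IsNonnegFrom s (h :: w) ↔ IsNonnegFrom s w := by
  rw [IsNonnegFrom, ← Nat.and_forall_add_one]
  simp [IsNonnegFrom]

theorem cons_d_iff : IsNonnegFrom (s + 1) (d :: w) ↔ IsNonnegFrom s w := by
  rw [IsNonnegFrom, ← Nat.and_forall_add_one]
  simp [IsNonnegFrom, add_right_comm s 1]

theorem not_zero_cons_d : ¬ IsNonnegFrom 0 (d :: w) := fun hw ↦ by
  simpa using hw 1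

theorem replicate_append_iff (n : ℕ) :
    IsNonnegFrom s (List.replicate n u ++ w) ↔ IsNonnegFrom (s + n) w := by
  induction n generalizing s with
  | zero => simp
  | succ n ih => rw [List.replicate_succ, List.cons_append, cons_u_iff, ih, add_assoc, add_comm 1]

end IsNonnegFrom

/-- The paths from height `s` to the axis with `r * a` up-steps and `j` horizontal steps in which
every u-segment has length divisible by `r`. -/
def dvdPathSet (r s a j : ℕ) : Set (List Step) :=
  {w | w.count u = r * a ∧ w.count d = s + r * a ∧ w.count h = j ∧ IsNonnegFrom s w ∧
    ∀ x ∈ uRuns w, r ∣ x}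

section dvdPathSet

variable {r s a j : ℕ} {w : List Step}

theorem sep_pathSet_eq_dvdPathSet (r m j : ℕ) :
    {w ∈ pathSet (r * m) j | ∀ x ∈ uRuns w, r ∣ x} = dvdPathSet r 0 m j := by
  ext w
  simp [pathSet, dvdPathSet, IsNonneg, IsNonnegFrom, and_assoc]

theorem length_of_mem_dvdPathSet (hw : w ∈ dvdPathSet r s a j) :
    w.length = r * a + (s + r * a) + j := by
  rw [← sum_count_eq_length, sum_univ, hw.1, hw.2.1, hw.2.2.1]

theorem nil_notMem_dvdPathSet (hr : 1 ≤ r) (hn : a + (s + r * a) + j ≠ 0) :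
    [] ∉ dvdPathSet r s a j := fun h_mem ↦ by
  have h_len : 0 = r * a + (s + r * a) + j := length_of_mem_dvdPathSet h_mem
  have h_le : a ≤ r * a := Nat.le_mul_of_pos_left a hr
  omega

theorem finite_dvdPathSet (r s a j : ℕ) : (dvdPathSet r s a j).Finite :=
  (List.finite_length_eq Step _).subset fun _ ↦ length_of_mem_dvdPathSet

theorem dvdPathSet_zero (r : ℕ) : dvdPathSet r 0 0 0 = {[]} := by
  ext w
  constructor
  · intro hw
    simpa using length_of_mem_dvdPathSet hw
  · rintro rfl
    simp [dvdPathSet, IsNonnegFrom, uRuns, runs]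

theorem replicate_append_mem_dvdPathSet :
    List.replicate r u ++ w ∈ dvdPathSet r s (a + 1) j ↔ w ∈ dvdPathSet r (s + r) a j := by
  have hu : r + w.count u = r * (a + 1) ↔ w.count u = r * a := by rw [mul_add_one]; omega
  have hd : s + r * (a + 1) = s + r + r * a := by ring
  simp [dvdPathSet, IsNonnegFrom.replicate_append_iff, forall_dvd_uRuns_replicate_self_append,
    List.count_replicate, hu, hd]

theorem cons_u_notMem_dvdPathSet : u :: w ∉ dvdPathSet r s 0 j := fun hw ↦ by
  simpa using hw.1

theorem cons_d_mem_dvdPathSet : d :: w ∈ dvdPathSet r (s + 1) a j ↔ w ∈ dvdPathSet r s a j := by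
  simp [dvdPathSet, IsNonnegFrom.cons_d_iff, uRuns_cons_of_ne_u, add_right_comm s 1]

theorem cons_d_notMem_dvdPathSet : d :: w ∉ dvdPathSet r 0 a j := fun hw ↦
  IsNonnegFrom.not_zero_cons_d hw.2.2.2.1

theorem cons_h_mem_dvdPathSet : h :: w ∈ dvdPathSet r s a (j + 1) ↔ w ∈ dvdPathSet r s a j := by
  simp [dvdPathSet, IsNonnegFrom.cons_h_iff, uRuns_cons_of_ne_u]

theorem cons_h_notMem_dvdPathSet : h :: w ∉ dvdPathSet r s a 0 := fun hw ↦ by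
  simpa using hw.2.2.1

theorem ncard_cons_u_mem_dvdPathSet (hr : 1 ≤ r) (s a j : ℕ) :
    {w | u :: w ∈ dvdPathSet r s (a + 1) j}.ncard = (dvdPathSet r (s + r) a j).ncard := by
  obtain ⟨q, rfl⟩ := Nat.exists_eq_add_of_le' hr
  have h_image : {w | u :: w ∈ dvdPathSet (q + 1) s (a + 1) j} =
      (List.replicate q u ++ ·) '' dvdPathSet (q + 1) (s + (q + 1)) a j := by
    ext w
    constructor
    · intro hw
      obtain ⟨v, hv⟩ := replicate_prefix_of_forall_dvd_uRuns hw.2.2.2.2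
      refine ⟨v, ?_, by simpa [List.replicate_succ] using hv⟩
      rwa [← replicate_append_mem_dvdPathSet, hv]
    · rintro ⟨v, hv, rfl⟩
      exact replicate_append_mem_dvdPathSet.2 hv
  rw [h_image, Set.ncard_image_of_injective _ (List.append_right_injective _)]

theorem ncard_dvdPathSet_mul_factorial (hr : 1 ≤ r) (s a j : ℕ) :
    (dvdPathSet r s a j).ncard * (a.factorial * (s + r * a + 1).factorial * j.factorial) =
      (s + 1) * (a + (s + r * a) + j).factorial := by
  induction hn : a + (s + r * a) + j generalizing s a j with
  | zero =>
    obtain ⟨rfl, rfl, rfl⟩ : a = 0 ∧ s = 0 ∧ j = 0 := by omega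
    simp [dvdPathSet_zero]
  | succ n ih =>
    set D := a.factorial * (s + r * a + 1).factorial * j.factorial with hD
    have hu : {w | u :: w ∈ dvdPathSet r s a j}.ncard * D = a * (s + r + 1) * n.factorial := by
      rcases a with _ | a
      · simp [cons_u_notMem_dvdPathSet]
      · have hb : s + r * (a + 1) = s + r + r * a := by ring
        rw [ncard_cons_u_mem_dvdPathSet hr, hD, hb, Nat.factorial_succ a]
        linear_combination (a + 1) * ih (s + r) a j (by omega)
    have hd : {w | d :: w ∈ dvdPathSet r s a j}.ncard * D =
        (s + r * a + 1) * s * n.factorial := by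
      rcases s with _ | s
      · simp [cons_d_notMem_dvdPathSet]
      · simp only [cons_d_mem_dvdPathSet, Set.ofPred_mem_eq]
        rw [hD, add_right_comm s 1, Nat.factorial_succ (s + r * a + 1)]
        linear_combination (s + r * a + 2) * ih s a j (by omega)
    have hh : {w | h :: w ∈ dvdPathSet r s a j}.ncard * D = j * (s + 1) * n.factorial := by
      rcases j with _ | j
      · simp [cons_h_notMem_dvdPathSet]
      · simp only [cons_h_mem_dvdPathSet, Set.ofPred_mem_eq]
        rw [hD, Nat.factorial_succ j]
        linear_combination (j + 1) * ih s a j (by omega)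
    have h_nil : [] ∉ dvdPathSet r s a j := nil_notMem_dvdPathSet hr (by omega)
    rw [ncard_eq_sum_ncard_cons (finite_dvdPathSet r s a j) h_nil, sum_univ, Nat.factorial_succ,
      ← hn]
    linear_combination hu + hd + hh

end dvdPathSet

theorem stmt5 (k m j r : ℕ) (hr : 1 ≤ r) :
    (Set.ncard {w ∈ pathSet (r * m) j | ∀ a ∈ uRuns w, r ∣ a} : ℚ) =
      (1 : ℚ) / (r * m + 1) * Nat.choose (r * m + j) (r * m) *
        Nat.choose ((r + 1) * m + j) m := by
  have h_count := ncard_dvdPathSet_mul_factorial hr 0 m j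
  have h_sum : (r + 1) * m + j = m + (r * m + j) := by ring
  rw [sep_pathSet_eq_dvdPathSet, h_sum, Nat.cast_add_choose, Nat.cast_add_choose]
  simp only [zero_add, one_mul, add_assoc, Nat.factorial_succ] at h_count
  qify at h_count
  rw [← h_count]
  field_simp
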